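/- Let T be a measure-preserving automorphism of a probability space (X, μ), let S be a mixing measure-preserving automorphism of a probability space (Y, ν), and let η be a joining of (X, μ, T) and (Y, ν, S). Then for every f ∈ L²(μ) and every g ∈ L²(ν) with ∫_Y g dν = 0 one has ∫_{X×Y} f(T^n x) g(y) dη(x,y) → 0 as n → ∞. -/

import Mathlib

open MeasureTheory Filter Topology

/-- A measure-preserving transformation `S` of `(Y, ν)` is mixing if
`ν (A ∩ S^{-n} B) → ν A * ν B` for all measurable sets `A`, `B`. -/
def MeasureMixing {Y : Type*} [MeasurableSpace Y] (S : Y → Y) (ν : Measure Y) : Prop :=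
  ∀ A B : Set Y, MeasurableSet A → MeasurableSet B →
    Tendsto (fun n => ν (A ∩ S^[n] ⁻¹' B)) atTop (𝓝 (ν A * ν B))

/-!
The heart of the matter is a fact about a linear isometry `U` of a Hilbert space: if
`⟪Uⁿ y, y⟫ → 0`, then `⟪Uⁿ x, y⟫ → 0` for every `x`. Let `M` be the span of the forward orbit of
`y`. The infimum over `n` of the distance from `Uⁿ x` to `M` is nearly attained by some `Uᴺ x` and
`z ∈ M`; then, uniformly in `m`, `Uᵐ⁺ᴺ x - Uᵐ z` is nearly orthogonal to `M`, hence to `y`, while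
`⟪Uᵐ z, y⟫ → 0` because `z ∈ M`. Mixing of `S` supplies the hypothesis for `U` the composition with
`T × S` on `L²(η)` and `y` a centred indicator function lifted from `Y`, and the indicators span a
dense subspace of `L²(ν)`.
-/

section HilbertSpace

variable {𝕜 H : Type*} [RCLike 𝕜] [NormedAddCommGroup H] [InnerProductSpace 𝕜 H]

lemma norm_inner_sq_le_of_forall_le_norm_sub_smul_sq {d : ℝ} {v y : H}
    (hd : ∀ t : 𝕜, d ≤ ‖v - t • y‖ ^ 2) :
    ‖inner 𝕜 v y‖ ^ 2 ≤ (‖v‖ ^ 2 - d) * ‖y‖ ^ 2 := by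
  obtain rfl | hy := eq_or_ne y 0
  · simp
  set t : 𝕜 := inner 𝕜 y v / (‖y‖ ^ 2 : ℝ) with ht
  have hty : ‖t • y‖ ^ 2 * ‖y‖ ^ 2 = ‖inner 𝕜 v y‖ ^ 2 := by
    rw [norm_smul, ht, norm_div, RCLike.norm_ofReal, abs_of_nonneg (by positivity),
      norm_inner_symm]
    field_simp
  have horth : inner 𝕜 (v - t • y) (t • y) = 0 := by
    rw [← Submodule.starProjection_singleton]
    exact Submodule.starProjection_inner_eq_zero _ _ (Submodule.starProjection_apply_mem _ _)
  have pythagoras : ‖v‖ ^ 2 = ‖v - t • y‖ ^ 2 + ‖t • y‖ ^ 2 := by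
    simpa only [sub_add_cancel, sq] using
      norm_add_sq_eq_norm_sq_add_norm_sq_of_inner_eq_zero _ _ horth
  rw [← hty]
  gcongr
  linarith [hd t]

lemma exists_forall_norm_inner_pow_sub_lt (U : H →ₗᵢ[𝕜] H) {M : Submodule 𝕜 H}
    (hM : Set.MapsTo U M M) (x : H) {y : H} (hy : y ∈ M) {ε : ℝ} (hε : 0 < ε) :
    ∃ N, ∃ z ∈ M, ∀ m, ‖inner 𝕜 ((U ^ (m + N)) x - (U ^ m) z) y‖ < ε := by
  set d : ℝ := ⨅ p : ℕ × M, ‖(U ^ p.1) x - p.2‖ ^ 2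
  have d_le (n : ℕ) (w : M) : d ≤ ‖(U ^ n) x - w‖ ^ 2 :=
    ciInf_le (f := fun p : ℕ × M => ‖(U ^ p.1) x - p.2‖ ^ 2)
      ⟨0, by rintro _ ⟨p, rfl⟩; positivity⟩ (n, w)
  obtain ⟨δ, hδ, hδy⟩ : ∃ δ > 0, ‖y‖ ^ 2 * δ < ε ^ 2 := exists_pos_mul_lt (by positivity) _
  obtain ⟨⟨N, z⟩, hNz⟩ : ∃ p : ℕ × M, ‖(U ^ p.1) x - p.2‖ ^ 2 < d + δ :=
    exists_lt_of_ciInf_lt (lt_add_of_pos_right d hδ)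
  refine ⟨N, z, z.2, fun m => lt_of_pow_lt_pow_left₀ 2 hε.le ?_⟩
  have norm_eq : ‖(U ^ (m + N)) x - (U ^ m) z‖ = ‖(U ^ N) x - z‖ := by
    rw [pow_add, LinearIsometry.coe_mul, Function.comp_apply, ← map_sub, LinearIsometry.norm_map]
  have map_mem : (U ^ m) z ∈ M := by
    rw [LinearIsometry.coe_pow]
    exact hM.iterate m z.2
  have d_le_sub_smul (t : 𝕜) : d ≤ ‖(U ^ (m + N)) x - (U ^ m) z - t • y‖ ^ 2 := by
    rw [sub_sub]
    exact d_le (m + N) ⟨_, M.add_mem map_mem (M.smul_mem t hy)⟩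
  calc ‖inner 𝕜 ((U ^ (m + N)) x - (U ^ m) z) y‖ ^ 2
      ≤ (‖(U ^ (m + N)) x - (U ^ m) z‖ ^ 2 - d) * ‖y‖ ^ 2 :=
        norm_inner_sq_le_of_forall_le_norm_sub_smul_sq d_le_sub_smul
    _ ≤ δ * ‖y‖ ^ 2 := by
        rw [norm_eq]
        gcongr
        linarith
    _ < ε ^ 2 := by rwa [mul_comm]

theorem tendsto_inner_pow_apply_of_tendsto_inner_pow_apply_self (U : H →ₗᵢ[𝕜] H) {y : H}
    (hy : Tendsto (fun n => inner 𝕜 ((U ^ n) y) y) atTop (𝓝 0)) (x : H) :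
    Tendsto (fun n => inner 𝕜 ((U ^ n) x) y) atTop (𝓝 0) := by
  set M : Submodule 𝕜 H := Submodule.span 𝕜 (Set.range fun k => (U ^ k) y)
  have y_mem : y ∈ M := Submodule.subset_span ⟨0, rfl⟩
  have le_comap : M ≤ M.comap U.toLinearMap := Submodule.span_le.2 <| by
    rintro _ ⟨k, rfl⟩
    exact Submodule.subset_span ⟨k + 1, by simp only [pow_succ']; rfl⟩
  have tendsto_of_mem (z) (hz : z ∈ M) :
      Tendsto (fun n => inner 𝕜 ((U ^ n) z) y) atTop (𝓝 0) := by
    induction hz using Submodule.span_induction with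
    | mem z hz =>
      obtain ⟨k, rfl⟩ := hz
      refine (hy.comp (tendsto_add_atTop_nat k)).congr fun n => ?_
      rw [Function.comp_apply, pow_add, LinearIsometry.coe_mul, Function.comp_apply]
    | zero => simp
    | add z w _ _ hz hw => simpa [inner_add_left] using hz.add hw
    | smul c z _ hz => simpa [inner_smul_left] using hz.const_mul (star c)
  refine Metric.tendsto_atTop.2 fun ε hε => ?_
  obtain ⟨N, z, hz, hNz⟩ := exists_forall_norm_inner_pow_sub_lt U le_comap x y_mem (half_pos hε)
  obtain ⟨K, hK⟩ := Metric.tendsto_atTop.1 (tendsto_of_mem z hz) (ε / 2) (half_pos hε)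
  refine ⟨K + N, fun n hn => ?_⟩
  obtain ⟨m, rfl⟩ := Nat.exists_eq_add_of_le' (le_of_add_le_right hn)
  have hm := hK m (by lia)
  rw [dist_zero_right] at hm ⊢
  calc ‖inner 𝕜 ((U ^ (m + N)) x) y‖
      = ‖inner 𝕜 ((U ^ (m + N)) x - (U ^ m) z) y + inner 𝕜 ((U ^ m) z) y‖ := by
        rw [← inner_add_left, sub_add_cancel]
    _ ≤ ‖inner 𝕜 ((U ^ (m + N)) x - (U ^ m) z) y‖ + ‖inner 𝕜 ((U ^ m) z) y‖ := norm_add_le _ _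
    _ < ε := by linarith [hNz m]

end HilbertSpace

section CompMeasurePreserving

variable {α β E : Type*} [MeasurableSpace α] [MeasurableSpace β] {μ : Measure α} {ν : Measure β}
  [NormedAddCommGroup E] {p : ENNReal}

lemma compMeasurePreservingₗᵢ_pow {𝕜 : Type*} [NormedRing 𝕜] [Module 𝕜 E] [IsBoundedSMul 𝕜 E]
    [Fact (1 ≤ p)] {R : α → α} (hR : MeasurePreserving R μ μ) (n : ℕ) :
    (Lp.compMeasurePreservingₗᵢ 𝕜 R hR : Lp E p μ →ₗᵢ[𝕜] Lp E p μ) ^ n =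
      Lp.compMeasurePreservingₗᵢ 𝕜 R^[n] (hR.iterate n) := by
  ext1 g
  induction n with
  | zero => exact (Lp.compMeasurePreserving_id_apply g).symm
  | succ n ih =>
    rw [pow_succ', LinearIsometry.coe_mul, Function.comp_apply, ih]
    exact (Lp.compMeasurePreserving_comp_apply g (hR.iterate n) hR).symm

lemma compMeasurePreserving_comm_of_semiconj {R : α → α} (hR : MeasurePreserving R μ μ)
    {S : β → β} (hS : MeasurePreserving S ν ν) {π : α → β} (hπ : MeasurePreserving π μ ν)
    (hπR : Function.Semiconj π R S) (g : Lp E p ν) :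
    Lp.compMeasurePreserving R hR (Lp.compMeasurePreserving π hπ g) =
      Lp.compMeasurePreserving π hπ (Lp.compMeasurePreserving S hS g) := by
  simp only [← Lp.compMeasurePreserving_comp_apply, hπR.comp_eq]

lemma compMeasurePreserving_const [IsFiniteMeasure μ] [IsFiniteMeasure ν] {π : α → β}
    (hπ : MeasurePreserving π μ ν) (c : E) :
    Lp.compMeasurePreserving π hπ (Lp.const p ν c) = Lp.const p μ c := by
  simp only [← indicatorConstLp_univ]
  exact Lp.indicatorConstLp_compMeasurePreserving MeasurableSet.univ (measure_ne_top ν _) c hπ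

lemma inner_const_eq_inner_integral {𝕜 : Type*} [RCLike 𝕜] [InnerProductSpace 𝕜 E]
    [CompleteSpace E] [NormedSpace ℝ E] [IsFiniteMeasure μ] (c : E) (f : Lp E 2 μ) :
    inner 𝕜 (Lp.const 2 μ c) f = inner 𝕜 c (∫ x, f x ∂μ) := by
  rw [← indicatorConstLp_univ, L2.inner_indicatorConstLp_eq_inner_setIntegral, setIntegral_univ]

lemma integral_compMeasurePreserving [NormedSpace ℝ E] {π : α → β} (hπ : MeasurePreserving π μ ν)
    (f : Lp E p ν) : ∫ x, Lp.compMeasurePreserving π hπ f x ∂μ = ∫ y, f y ∂ν := by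
  obtain ⟨π_measurable, rfl⟩ := id hπ
  rw [integral_congr_ae (Lp.coeFn_compMeasurePreserving f hπ)]
  exact (integral_map π_measurable.aemeasurable (Lp.aestronglyMeasurable f)).symm

lemma inner_compMeasurePreserving_const {𝕜 : Type*} [RCLike 𝕜] [InnerProductSpace 𝕜 E]
    [CompleteSpace E] [NormedSpace ℝ E] [IsFiniteMeasure μ] {π : α → β}
    (hπ : MeasurePreserving π μ ν) (f : Lp E 2 ν) (c : E) :
    inner 𝕜 (Lp.compMeasurePreserving π hπ f) (Lp.const 2 μ c) = inner 𝕜 (∫ y, f y ∂ν) c := by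
  rw [← inner_conj_symm, inner_const_eq_inner_integral, integral_compMeasurePreserving,
    inner_conj_symm]

end CompMeasurePreserving

/-- The indicator of `B` with value `c`, minus its mean: the vectors of mean zero for which mixing
directly gives decay of autocorrelations. -/
noncomputable def centeredIndicator {Y E : Type*} [MeasurableSpace Y] (ν : Measure Y)
    [IsFiniteMeasure ν] [NormedAddCommGroup E] [NormedSpace ℝ E] {B : Set Y}
    (hB : MeasurableSet B) (c : E) : Lp E 2 ν :=
  indicatorConstLp 2 hB (measure_ne_top ν B) c - Lp.const 2 ν (ν.real B • c)

namespace MeasureMixing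

variable {Y E 𝕜 : Type*} [MeasurableSpace Y] {ν : Measure Y} {S : Y → Y}

lemma tendsto_measureReal_preimage_inter_self [IsFiniteMeasure ν] (hmix : MeasureMixing S ν)
    {B : Set Y} (hB : MeasurableSet B) :
    Tendsto (fun n => ν.real (S^[n] ⁻¹' B ∩ B)) atTop (𝓝 (ν.real B ^ 2)) := by
  simp only [measureReal_def, sq, ← ENNReal.toReal_mul, Set.inter_comm]
  exact (ENNReal.tendsto_toReal (by finiteness)).comp (hmix B B hB hB)

variable [IsProbabilityMeasure ν] [RCLike 𝕜] [NormedAddCommGroup E] [InnerProductSpace 𝕜 E]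
  [CompleteSpace E] [NormedSpace ℝ E]

variable (𝕜) in
lemma tendsto_inner_pow_centeredIndicator_self (hmix : MeasureMixing S ν)
    (hS : MeasurePreserving S ν ν) {B : Set Y} (hB : MeasurableSet B) (c : E) :
    Tendsto (fun n => inner 𝕜
      ((Lp.compMeasurePreservingₗᵢ 𝕜 S hS ^ n) (centeredIndicator ν hB c))
      (centeredIndicator ν hB c)) atTop (𝓝 0) := by
  set k := centeredIndicator ν hB c with hk
  have iterate_apply (n : ℕ) : (Lp.compMeasurePreservingₗᵢ 𝕜 S hS ^ n) k =
      indicatorConstLp 2 ((hS.iterate n).measurable hB) (measure_ne_top ν _) c -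
        Lp.const 2 ν (ν.real B • c) := by
    rw [compMeasurePreservingₗᵢ_pow, hk, centeredIndicator, map_sub]
    exact congrArg₂ (· - ·)
      (Lp.indicatorConstLp_compMeasurePreserving hB (measure_ne_top ν B) c (hS.iterate n))
      (compMeasurePreserving_const (hS.iterate n) _)
  have inner_eq (n : ℕ) : inner 𝕜 ((Lp.compMeasurePreservingₗᵢ 𝕜 S hS ^ n) k) k =
      (ν.real (S^[n] ⁻¹' B ∩ B) - ν.real B ^ 2) • inner 𝕜 c c := by
    have preimage : ν.real (S^[n] ⁻¹' B) = ν.real B := by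
      rw [measureReal_def, (hS.iterate n).measure_preimage hB.nullMeasurableSet, measureReal_def]
    rw [iterate_apply, hk]
    simp only [centeredIndicator, ← indicatorConstLp_univ, inner_sub_left, inner_sub_right,
      L2.inner_indicatorConstLp_indicatorConstLp, inner_smul_left_eq_smul,
      inner_smul_right_eq_smul, Set.inter_univ, Set.univ_inter, preimage, probReal_univ]
    module
  simp only [inner_eq]
  have tendsto_sub := (hmix.tendsto_measureReal_preimage_inter_self hB).sub_const (ν.real B ^ 2)
  simpa only [sub_self, zero_smul] using tendsto_sub.smul_const (inner 𝕜 c c)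

variable {Z : Type*} [MeasurableSpace Z] {η : Measure Z} {R : Z → Z} {π : Z → Y}

lemma tendsto_inner_pow_indicatorConstLp_factor (hmix : MeasureMixing S ν)
    (hS : MeasurePreserving S ν ν) (hR : MeasurePreserving R η η) (hπ : MeasurePreserving π η ν)
    (hπR : Function.Semiconj π R S) (F : Lp E 2 η) {B : Set Y} (hB : MeasurableSet B) (c : E) :
    Tendsto (fun n => inner 𝕜 ((Lp.compMeasurePreservingₗᵢ 𝕜 R hR ^ n) F)
      (Lp.compMeasurePreservingₗᵢ 𝕜 π hπ (indicatorConstLp 2 hB (measure_ne_top ν B) c))) atTop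
      (𝓝 (inner 𝕜 (∫ z, F z ∂η) (ν.real B • c))) := by
  have : IsFiniteMeasure η :=
    have : IsFiniteMeasure (η.map π) := hπ.map_eq ▸ inferInstance
    Measure.isFiniteMeasure_of_map hπ.aemeasurable
  set U : Lp E 2 η →ₗᵢ[𝕜] Lp E 2 η := Lp.compMeasurePreservingₗᵢ 𝕜 R hR with hU
  set J : Lp E 2 ν →ₗᵢ[𝕜] Lp E 2 η := Lp.compMeasurePreservingₗᵢ 𝕜 π hπ
  set m : E := ν.real B • c
  set k : Lp E 2 ν := centeredIndicator ν hB c with hk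
  have pow_J (n : ℕ) : (U ^ n) (J k) = J ((Lp.compMeasurePreservingₗᵢ 𝕜 S hS ^ n) k) := by
    rw [hU, compMeasurePreservingₗᵢ_pow, compMeasurePreservingₗᵢ_pow]
    exact compMeasurePreserving_comm_of_semiconj _ _ hπ (hπR.iterate_right n) k
  have J_indicator : J (indicatorConstLp 2 hB (measure_ne_top ν B) c) =
      J k + Lp.const 2 η m := by
    rw [hk, centeredIndicator, map_sub, ← compMeasurePreserving_const hπ]
    exact (sub_add_cancel _ _).symm
  have inner_mean (n : ℕ) : inner 𝕜 ((U ^ n) F) (Lp.const 2 η m) = inner 𝕜 (∫ z, F z ∂η) m := by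
    rw [hU, compMeasurePreservingₗᵢ_pow]
    exact inner_compMeasurePreserving_const (hR.iterate n) F m
  have tendsto_self : Tendsto (fun n => inner 𝕜 ((U ^ n) (J k)) (J k)) atTop (𝓝 0) := by
    simp only [pow_J, J.inner_map_map]
    exact hmix.tendsto_inner_pow_centeredIndicator_self 𝕜 hS hB c
  simp only [J_indicator, inner_add_right, inner_mean]
  simpa only [zero_add] using
    (tendsto_inner_pow_apply_of_tendsto_inner_pow_apply_self U tendsto_self F).add_const _

theorem tendsto_inner_pow_factor (hmix : MeasureMixing S ν)
    (hS : MeasurePreserving S ν ν) (hR : MeasurePreserving R η η) (hπ : MeasurePreserving π η ν)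
    (hπR : Function.Semiconj π R S) (F : Lp E 2 η) (g : Lp E 2 ν) :
    Tendsto (fun n => inner 𝕜 ((Lp.compMeasurePreservingₗᵢ 𝕜 R hR ^ n) F)
      (Lp.compMeasurePreservingₗᵢ 𝕜 π hπ g)) atTop
      (𝓝 (inner 𝕜 (∫ z, F z ∂η) (∫ y, g y ∂ν))) := by
  induction g using Lp.induction (p := 2) ENNReal.ofNat_ne_top with
  | indicatorConst c hB _ =>
    rw [Lp.simpleFunc.coe_indicatorConst, integral_indicatorConstLp]
    exact hmix.tendsto_inner_pow_indicatorConstLp_factor hS hR hπ hπR F hB c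
  | add hf hg _ hf_lim hg_lim =>
    simp only [← inner_const_eq_inner_integral, map_add, inner_add_right] at hf_lim hg_lim ⊢
    exact hf_lim.add hg_lim
  | isClosed =>
    simp only [← inner_const_eq_inner_integral]
    refine (LipschitzWith.uniformEquicontinuous _ ‖F‖₊ fun n => ?_).equicontinuous
      |>.isClosed_setOfPred_tendsto (by fun_prop)
    refine LipschitzWith.of_dist_le_mul fun v w => ?_
    rw [dist_eq_norm, ← inner_sub_right, ← map_sub, dist_eq_norm]
    simpa only [LinearIsometry.norm_map, coe_nnnorm] using norm_inner_le_norm (𝕜 := 𝕜)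
      ((Lp.compMeasurePreservingₗᵢ 𝕜 R hR ^ n) F) (Lp.compMeasurePreservingₗᵢ 𝕜 π hπ (v - w))

end MeasureMixing

theorem joining_with_mixing_tendsto_zero_general {X Y E 𝕜 : Type*} [MeasurableSpace X]
    [MeasurableSpace Y] [RCLike 𝕜] [NormedAddCommGroup E] [InnerProductSpace 𝕜 E]
    [CompleteSpace E] [NormedSpace ℝ E] {μ : Measure X} {ν : Measure Y} [IsProbabilityMeasure ν]
    {T : X → X} {S : Y → Y} (hS : MeasurePreserving S ν ν) (hSmix : MeasureMixing S ν)
    {η : Measure (X × Y)} (hη : MeasurePreserving (Prod.map T S) η η)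
    (hη1 : MeasurePreserving Prod.fst η μ) (hη2 : MeasurePreserving Prod.snd η ν)
    (f : Lp E 2 μ) (g : Lp E 2 ν) :
    Tendsto (fun n => ∫ p, inner 𝕜 (f (T^[n] p.1)) (g p.2) ∂η) atTop
      (𝓝 (inner 𝕜 (∫ x, f x ∂μ) (∫ y, g y ∂ν))) := by
  set F : Lp E 2 η := Lp.compMeasurePreserving Prod.fst hη1 f
  rw [← integral_compMeasurePreserving hη1 f]
  refine (hSmix.tendsto_inner_pow_factor hS hη hη2 (fun _ => rfl) F g).congr fun n => ?_
  rw [compMeasurePreservingₗᵢ_pow, L2.inner_def]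
  refine integral_congr_ae ?_
  filter_upwards [Lp.coeFn_compMeasurePreserving F (hη.iterate n),
    (hη.iterate n).quasiMeasurePreserving.ae_eq_comp (Lp.coeFn_compMeasurePreserving f hη1),
    Lp.coeFn_compMeasurePreserving g hη2] with p hF hf hg
  refine congrArg₂ (inner 𝕜) (hF.trans (hf.trans ?_)) hg
  simp only [Prod.map_iterate, Function.comp_apply, Prod.map_fst]

/-- If `η` is a joining of `(X, μ, T)` with a mixing system `(Y, ν, S)`, then for
`f ∈ L²(μ)` and `g ∈ L²(ν)` with `∫ g dν = 0`, `∫ f(Tⁿ x) g(y) dη → 0`. -/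
theorem joining_with_mixing_tendsto_zero
    {X Y : Type*} [MeasurableSpace X] [MeasurableSpace Y]
    (μ : Measure X) (ν : Measure Y) [IsProbabilityMeasure μ] [IsProbabilityMeasure ν]
    (T : X ≃ᵐ X) (hT : MeasurePreserving T μ μ)
    (S : Y ≃ᵐ Y) (hS : MeasurePreserving S ν ν) (hSmix : MeasureMixing (⇑S) ν)
    (η : Measure (X × Y)) [IsProbabilityMeasure η]
    (hηinv : η.map (Prod.map ⇑T ⇑S) = η)
    (hη1 : η.map Prod.fst = μ) (hη2 : η.map Prod.snd = ν)
    (f : Lp ℝ 2 μ) (g : Lp ℝ 2 ν) (hg : ∫ y, g y ∂ν = 0) :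
    Tendsto (fun n => ∫ p, f ((⇑T)^[n] p.1) * g p.2 ∂η) atTop (𝓝 0) := by
  simpa [hg, mul_comm] using joining_with_mixing_tendsto_zero_general (𝕜 := ℝ) hS hSmix
    ⟨T.measurable.prodMap S.measurable, hηinv⟩ ⟨measurable_fst, hη1⟩ ⟨measurable_snd, hη2⟩ f g
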